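/- Let Δ be a convex lattice polygon with boundary data β, and let γ be a λ-increasing lattice path of length n from p to q contained in Δ that is not β₋-initial. Let k be ANY index with 0 < k < n at which γ makes a right turn, i.e. det(γ(k)−γ(k−1), γ(k+1)−γ(k)) < 0. Let γ′ be the path obtained from γ by deleting the point γ(k), let γ″ be the path obtained by replacing γ(k) with γ(k−1)+γ(k+1)−γ(k), and let T be the triangle with vertices γ(k−1), γ(k), γ(k+1). Then mult₋(γ) = 2·Area(T)·mult₋(γ′) + mult₋(γ″), where the last term is taken to be 0 if γ″ is not contained in Δ. In other words, the negative multiplicity of a lattice path stays the same if at each step of the recursion any right turn is used, not necessarily the first one. -/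

import Mathlib

open Classical

noncomputable section

namespace TropPaths

/-- Lattice points of the plane. -/
abbrev Pt := ℤ × ℤ

/-- The order on `ℤ²` induced by `λ(x,y) = x - εy` for a small irrational `ε > 0`:
`p ≺ q` iff `p₁ < q₁`, or (`p₁ = q₁` and `p₂ > q₂`). -/
def lamLT (p q : Pt) : Prop := p.1 < q.1 ∨ (p.1 = q.1 ∧ q.2 < p.2)

/-- A lattice path, recorded as the list of its points, is `λ`-increasing. -/
def Increasing (γ : List Pt) : Prop := List.Chain' lamLT γ

/-- The determinant of two vectors in `ℤ²`. -/
def det (u v : Pt) : ℤ := u.1 * v.2 - u.2 * v.1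

/-- The `k`-th point of a path (junk value out of range). -/
def pt (γ : List Pt) (k : ℕ) : Pt := γ.getD k (0, 0)

/-- The `k`-th step vector of a path. -/
def stepAt (γ : List Pt) (k : ℕ) : Pt := pt γ (k + 1) - pt γ k

/-- The list of all step vectors of a path. -/
def steps (γ : List Pt) : List Pt := List.zipWith (fun a b => b - a) γ γ.tail

/-- The multiset of down steps `(0,-s)`, `s > 0`, of a path. -/
def downSteps (γ : List Pt) : Multiset Pt :=
  Multiset.filter (fun v => v.1 = 0 ∧ v.2 < 0) (steps γ : Multiset Pt)

/-- The multiset of up-right steps of a path. -/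
def upRightSteps (γ : List Pt) : Multiset Pt :=
  Multiset.filter (fun v => 0 < v.1 ∧ 0 < v.2) (steps γ : Multiset Pt)

/-- The path makes a turn of sign `s` at the (interior) index `k`; for left turns
`s = (0 < ·)`, for right turns `s = (· < 0)`. -/
def TurnAt (s : ℤ → Prop) (γ : List Pt) (k : ℕ) : Prop :=
  0 < k ∧ k + 1 < γ.length ∧ s (det (pt γ k - pt γ (k - 1)) (pt γ (k + 1) - pt γ k))

/-- `k` is the first turn of sign `s` of the path. -/
def FirstTurn (s : ℤ → Prop) (γ : List Pt) (k : ℕ) : Prop :=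
  TurnAt s γ k ∧ ∀ j, TurnAt s γ j → k ≤ j

/-- Twice the area of the triangle with vertices `γ(k-1), γ(k), γ(k+1)`. -/
def triArea2 (γ : List Pt) (k : ℕ) : ℕ :=
  (det (pt γ k - pt γ (k - 1)) (pt γ (k + 1) - pt γ k)).natAbs

/-- The path obtained by cutting the corner at index `k`, i.e. deleting the point `γ(k)`. -/
def cut (γ : List Pt) (k : ℕ) : List Pt := γ.eraseIdx k

/-- The path obtained by completing the parallelogram at index `k`, i.e. replacing
`γ(k)` by `γ(k-1) + γ(k+1) - γ(k)`. -/
def push (γ : List Pt) (k : ℕ) : List Pt :=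
  γ.set k (pt γ (k - 1) + pt γ (k + 1) - pt γ k)

/-- All points of the path lie in `Δ`. -/
def Inside (Δ : Set Pt) (γ : List Pt) : Prop := ∀ z ∈ γ, z ∈ Δ

/-- Mikhalkin's multiplicity recursion, as a functional relation: `MultRel Δ Init s γ m`
means that the recursion (performed always at the *first* turn of sign `s`) assigns the
multiplicity `m` to the path `γ`.  Here `Δ` is the set of lattice points of the polygon,
`Init` the set of initial paths (of multiplicity `1`), and `s` the turn sign
(`0 < ·` for left turns / `mult₊`, `· < 0` for right turns / `mult₋`). -/
inductive MultRel (Δ : Set Pt) (Init : List Pt → Prop) (s : ℤ → Prop) : List Pt → ℕ → Prop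
  | init {γ : List Pt} : Init γ → MultRel Δ Init s γ 1
  | noTurn {γ : List Pt} : ¬Init γ → (∀ k, ¬TurnAt s γ k) → MultRel Δ Init s γ 0
  | stepIn {γ : List Pt} {k m' m'' : ℕ} : ¬Init γ → FirstTurn s γ k →
      Inside Δ (push γ k) → MultRel Δ Init s (cut γ k) m' →
      MultRel Δ Init s (push γ k) m'' →
      MultRel Δ Init s γ (triArea2 γ k * m' + m'')
  | stepOut {γ : List Pt} {k m' : ℕ} : ¬Init γ → FirstTurn s γ k →
      ¬Inside Δ (push γ k) → MultRel Δ Init s (cut γ k) m' →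
      MultRel Δ Init s γ (triArea2 γ k * m')

/-- The multiplicity function determined by Mikhalkin's recursion. -/
def multOf (Δ : Set Pt) (Init : List Pt → Prop) (s : ℤ → Prop) (γ : List Pt) : ℕ :=
  if h : ∃ m, MultRel Δ Init s γ m then h.choose else 0

/-- `γ ≺ δ`: the path `δ` is obtained from `γ` by finitely many steps of the multiplicity
recursion (each step cuts the corner at the first turn of sign `s`, or completes the
parallelogram there). -/
inductive Reaches (Δ : Set Pt) (Init : List Pt → Prop) (s : ℤ → Prop) : List Pt → List Pt → Prop
  | refl (γ : List Pt) : Reaches Δ Init s γ γ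
  | cutStep {γ δ : List Pt} {k : ℕ} : ¬Init γ → FirstTurn s γ k →
      Reaches Δ Init s (cut γ k) δ → Reaches Δ Init s γ δ
  | pushStep {γ δ : List Pt} {k : ℕ} : ¬Init γ → FirstTurn s γ k →
      Inside Δ (push γ k) → Reaches Δ Init s (push γ k) δ → Reaches Δ Init s γ δ

/-- The lattice path starting at `p` with the given list of step vectors. -/
def pathFrom : Pt → List Pt → List Pt
  | p, [] => [p]
  | p, v :: vs => p :: pathFrom (p + v) vs

/-- Horizontal (rightward) steps of the given sizes. -/
def hSteps (l : List ℕ) : List Pt := l.map fun k => ((k : ℤ), 0)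

/-- Vertical downward steps of the given sizes. -/
def dSteps (l : List ℕ) : List Pt := l.map fun k => ((0 : ℤ), -(k : ℤ))

/-- A multiset of positive integers is a partition of `t`. -/
def IsPartition (m : Multiset ℕ) (t : ℕ) : Prop := (∀ k ∈ m, 0 < k) ∧ m.sum = t

/-! ## The rectangle `[0,c] × [0,d]` -/

/-- The lattice points of the rectangle with vertices `(0,0), (c,0), (0,d), (c,d)`. -/
def rect (c d : ℕ) : Set Pt := {z | 0 ≤ z.1 ∧ z.1 ≤ (c : ℤ) ∧ 0 ≤ z.2 ∧ z.2 ≤ (d : ℤ)}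

/-- `β₊`-initial paths of the rectangle: from `p = (0,d)` clockwise along the top edge with
step sizes the parts of `μ₂` and then down the right edge with step sizes the parts of `ν₂`. -/
def InitPlusRect (d : ℕ) (μ₂ ν₂ : Multiset ℕ) (γ : List Pt) : Prop :=
  ∃ s t : List ℕ, (s : Multiset ℕ) = μ₂ ∧ (t : Multiset ℕ) = ν₂ ∧
    γ = pathFrom (0, (d : ℤ)) (hSteps s ++ dSteps t)

/-- `β₋`-initial paths of the rectangle: from `p = (0,d)` counterclockwise down the left edge
with step sizes the parts of `ν₁` and then along the bottom edge with step sizes the parts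
of `μ₁`. -/
def InitMinusRect (d : ℕ) (μ₁ ν₁ : Multiset ℕ) (γ : List Pt) : Prop :=
  ∃ s t : List ℕ, (s : Multiset ℕ) = ν₁ ∧ (t : Multiset ℕ) = μ₁ ∧
    γ = pathFrom (0, (d : ℤ)) (dSteps s ++ hSteps t)

/-- `mult₊` for the rectangle with boundary data `(μ₁, μ₂, ν₁, ν₂)`. -/
def multPlusRect (c d : ℕ) (μ₂ ν₂ : Multiset ℕ) : List Pt → ℕ :=
  multOf (rect c d) (InitPlusRect d μ₂ ν₂) (fun x => 0 < x)

/-- `mult₋` for the rectangle with boundary data `(μ₁, μ₂, ν₁, ν₂)`. -/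
def multMinusRect (c d : ℕ) (μ₁ ν₁ : Multiset ℕ) : List Pt → ℕ :=
  multOf (rect c d) (InitMinusRect d μ₁ ν₁) (fun x => x < 0)

/-- `mult = mult₊ · mult₋` for the rectangle with boundary data `(μ₁, μ₂, ν₁, ν₂)`. -/
def multRect (c d : ℕ) (μ₁ μ₂ ν₁ ν₂ : Multiset ℕ) (γ : List Pt) : ℕ :=
  multPlusRect c d μ₂ ν₂ γ * multMinusRect c d μ₁ ν₁ γ

/-- A `λ`-increasing lattice path from `(0,d)` to `(c,0)` contained in the rectangle. -/
def IsPathRect (c d : ℕ) (γ : List Pt) : Prop :=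
  Increasing γ ∧ γ.head? = some (0, (d : ℤ)) ∧ γ.getLast? = some ((c : ℤ), 0) ∧
    Inside (rect c d) γ

/-- The genericity condition: all subset sums of the `xᵢ` are distinct. -/
def Generic {n : ℕ} (x : Fin n → ℕ) : Prop :=
  ∀ I J : Finset (Fin n), I ≠ J → ∑ i ∈ I, x i ≠ ∑ j ∈ J, x j

/-! ## General convex lattice polygons with boundary data -/

/-- The displacement vector of an edge: (lattice length of the edge) times the primitive
direction.  An edge is recorded as a pair (primitive direction, multiset of step lengths
`β_e`, listing each length `k` with multiplicity `β_e(k)`). -/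
def edgeVec (e : Pt × Multiset ℕ) : Pt := ((e.2.sum : ℤ) * e.1.1, (e.2.sum : ℤ) * e.1.2)

/-- The endpoint of a chain of edges starting at `p`. -/
def chainEnd (p : Pt) (l : List (Pt × Multiset ℕ)) : Pt := p + (l.map edgeVec).sum

/-- The successive vertices of a chain of edges starting at `p`. -/
def chainPts : Pt → List (Pt × Multiset ℕ) → List Pt
  | p, [] => [p]
  | p, e :: es => p :: chainPts (p + edgeVec e) es

/-- A convex lattice polygon together with boundary data `β`: it is encoded by its
`λ`-minimal vertex `p`, and its two boundary chains from `p` to the `λ`-maximal vertex `q`,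
the clockwise one `cw` and the counterclockwise one `ccw`.  Each edge carries its primitive
direction and the multiset of step lengths `β_e` (which must sum to the lattice length of
the edge; here the lattice length is *defined* as that sum). -/
structure PolyData where
  /-- the `λ`-minimal vertex -/
  p : Pt
  /-- the clockwise boundary chain from `p` to `q` -/
  cw : List (Pt × Multiset ℕ)
  /-- the counterclockwise boundary chain from `p` to `q` -/
  ccw : List (Pt × Multiset ℕ)
  cw_ne : cw ≠ []
  ccw_ne : ccw ≠ []
  /-- all edge directions are `λ`-positive -/
  cw_lam : ∀ e ∈ cw, lamLT (0, 0) e.1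
  ccw_lam : ∀ e ∈ ccw, lamLT (0, 0) e.1
  /-- edge directions are primitive -/
  cw_prim : ∀ e ∈ cw, Int.gcd e.1.1 e.1.2 = 1
  ccw_prim : ∀ e ∈ ccw, Int.gcd e.1.1 e.1.2 = 1
  /-- the step lengths on each edge are positive, and each edge has positive lattice length -/
  cw_pos : ∀ e ∈ cw, e.2 ≠ 0 ∧ ∀ k ∈ e.2, 0 < k
  ccw_pos : ∀ e ∈ ccw, e.2 ≠ 0 ∧ ∀ k ∈ e.2, 0 < k
  /-- strict convexity: consecutive clockwise edges turn right -/
  cw_conv : (cw.map Prod.fst).Chain' fun u v => det u v < 0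
  /-- strict convexity: consecutive counterclockwise edges turn left -/
  ccw_conv : (ccw.map Prod.fst).Chain' fun u v => 0 < det u v
  /-- the two chains have common endpoint `q` -/
  closes : chainEnd p cw = chainEnd p ccw
  /-- convexity at the vertex `p` -/
  junct_p : ∀ u w : Pt, (cw.map Prod.fst).head? = some u →
    (ccw.map Prod.fst).head? = some w → 0 < det w u
  /-- convexity at the vertex `q` -/
  junct_q : ∀ u w : Pt, (cw.map Prod.fst).getLast? = some u →
    (ccw.map Prod.fst).getLast? = some w → 0 < det u w

/-- The `λ`-maximal vertex of the polygon. -/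
def PolyData.q (P : PolyData) : Pt := chainEnd P.p P.ccw

/-- The canonical embedding `ℤ² → ℝ²`. -/
def toR (z : Pt) : ℝ × ℝ := ((z.1 : ℝ), (z.2 : ℝ))

/-- The set of lattice points of the polygon: all lattice points of the convex hull of the
boundary vertices. -/
def polySet (P : PolyData) : Set Pt :=
  {z | toR z ∈ convexHull ℝ
    (toR '' {w | w ∈ chainPts P.p P.cw ∨ w ∈ chainPts P.p P.ccw})}

/-- `ExpandChain chain s` holds if the list of step vectors `s` traverses the edges of
`chain` in order, taking on each edge `e` exactly `β_e(k)` steps of lattice length `k`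
(in some order). -/
def ExpandChain : List (Pt × Multiset ℕ) → List Pt → Prop
  | [], s => s = []
  | e :: es, s => ∃ (l : List ℕ) (r : List Pt), (l : Multiset ℕ) = e.2 ∧ ExpandChain es r ∧
      s = (l.map fun k => ((k : ℤ) * e.1.1, (k : ℤ) * e.1.2)) ++ r

/-- The initial paths determined by a boundary chain: the paths from `p` to `q` along the
chain whose steps on each edge `e` realize the data `β_e`. -/
def InitChain (p : Pt) (chain : List (Pt × Multiset ℕ)) (γ : List Pt) : Prop :=
  ∃ s, ExpandChain chain s ∧ γ = pathFrom p s

/-- `mult₋` of a path in the polygon `P`. -/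
def multMinusP (P : PolyData) : List Pt → ℕ :=
  multOf (polySet P) (InitChain P.p P.ccw) (fun x => x < 0)

/-- `mult₊` of a path in the polygon `P`. -/
def multPlusP (P : PolyData) : List Pt → ℕ :=
  multOf (polySet P) (InitChain P.p P.cw) (fun x => 0 < x)

/-! ## Abstract part: step lists -/

/-- Positive step vectors. -/
def Pos (v : Pt) : Prop := lamLT (0, 0) v

/-- All partial sums of the step list stay in the set. -/
def InS (D : Set Pt) : Pt → List Pt → Prop
  | p, [] => p ∈ D
  | p, v :: w => p ∈ D ∧ InS D (p + v) w

/-- Number of inversions. -/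
def inv : List Pt → ℕ
  | [] => 0
  | u :: w => w.countP (fun v => decide (det u v < 0)) + inv w

/-- Closure under lattice convex combinations of three points. -/
def Cvx (D : Set Pt) : Prop := ∀ (x y z t : Pt) (α β γ : ℤ), 0 ≤ α → 0 ≤ β → 0 ≤ γ →
  0 < α + β + γ → (α + β + γ) * t.1 = α * x.1 + β * y.1 + γ * z.1 →
  (α + β + γ) * t.2 = α * x.2 + β * y.2 + γ * z.2 → x ∈ D → y ∈ D → z ∈ D → t ∈ D

theorem InS_append (D : Set Pt) (p : Pt) (l m : List Pt) :
    InS D p (l ++ m) ↔ InS D p l ∧ InS D (p + l.sum) m := by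
  induction l generalizing p with
  | nil => cases m <;> simp [InS]
  | cons a l ih => simp [InS, ih, add_assoc, and_assoc]

theorem InS_end {D : Set Pt} {p : Pt} {l : List Pt} (h : InS D p l) : p + l.sum ∈ D := by
  have := (InS_append D p l []).1 (by simpa using h)
  simpa [InS] using this.2

theorem in1 (D : Set Pt) (p : Pt) (l r : List Pt) (x : Pt) :
    InS D p (l ++ x :: r) ↔ InS D p l ∧ InS D (p + l.sum + x) r := by
  rw [InS_append]
  constructor
  · rintro ⟨h, h1, h2⟩; exact ⟨h, h2⟩
  · rintro ⟨h, h2⟩; exact ⟨h, InS_end h, h2⟩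

theorem InS_start {D : Set Pt} {p : Pt} {l : List Pt} (h : InS D p l) : p ∈ D := by
  cases l with
  | nil => exact h
  | cons a l => exact h.1

theorem in2 (D : Set Pt) (p : Pt) (l r : List Pt) (x y : Pt) :
    InS D p (l ++ x :: y :: r) ↔
      InS D p l ∧ p + l.sum + x ∈ D ∧ InS D (p + l.sum + x + y) r := by
  rw [in1]; simp [InS]

theorem in3 (D : Set Pt) (p : Pt) (l r : List Pt) (x y z : Pt) :
    InS D p (l ++ x :: y :: z :: r) ↔
      InS D p l ∧ p + l.sum + x ∈ D ∧ p + l.sum + x + y ∈ D ∧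
        InS D (p + l.sum + x + y + z) r := by
  rw [in1]; simp [InS]

theorem inv_swap (l r : List Pt) (u v : Pt) :
    inv (l ++ u :: v :: r) + (if det v u < 0 then 1 else 0) =
      inv (l ++ v :: u :: r) + (if det u v < 0 then 1 else 0) := by
  induction l with
  | nil =>
    simp only [List.nil_append, inv, List.countP_cons, decide_eq_true_eq]
    omega
  | cons a l ih =>
    simp only [List.cons_append, inv]
    have : (l ++ u :: v :: r).countP (fun v => decide (det a v < 0)) =
        (l ++ v :: u :: r).countP (fun v => decide (det a v < 0)) := by
      apply List.Perm.countP_eq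
      exact List.Perm.append_left _ (List.Perm.swap _ _ _)
    omega

theorem det_anti (u v : Pt) : det v u = - det u v := by simp [det]; ring

theorem inv_push (l r : List Pt) (u v : Pt) (h : det u v < 0) :
    inv (l ++ v :: u :: r) < inv (l ++ u :: v :: r) := by
  have := inv_swap l r u v
  have h2 := det_anti u v
  rw [if_neg (by omega), if_pos h] at this
  omega

theorem inv_par (l r : List Pt) (u v : Pt) (h : det u v = 0) :
    inv (l ++ v :: u :: r) = inv (l ++ u :: v :: r) := by
  have := inv_swap l r u v
  have h2 := det_anti u v
  rw [if_neg (by omega), if_neg (by omega)] at this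
  omega

/-- The order on step lists used for the induction. -/
def mlt (w' w : List Pt) : Prop :=
  w'.length < w.length ∨ (w'.length = w.length ∧ inv w' < inv w)

theorem Pos_add {u v : Pt} (hu : Pos u) (hv : Pos v) : Pos (u + v) := by
  simp only [Pos, lamLT, Prod.fst_add, Prod.snd_add] at *
  omega

theorem det_trans {a b c : Pt} (ha : Pos a) (hb : Pos b) (hc : Pos c)
    (h1 : det a b < 0) (h2 : det b c < 0) : det a c < 0 := by
  obtain ⟨a1, a2⟩ := a
  obtain ⟨b1, b2⟩ := b
  obtain ⟨c1, c2⟩ := c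
  simp only [Pos, lamLT, det] at *
  have key : b1 * (a1 * c2 - a2 * c1) = a1 * (b1 * c2 - b2 * c1) + c1 * (a1 * b2 - a2 * b1) := by
    ring
  have hc0 : 0 ≤ c1 := by omega
  have hb0 : 0 < b1 := by
    rcases hb with hb | ⟨hb, hb'⟩
    · exact hb
    · exfalso; rw [← hb] at h2; nlinarith
  have ha0 : 0 < a1 := by
    rcases ha with ha | ⟨ha, ha'⟩
    · exact ha
    · exfalso; rw [← ha] at h1; nlinarith
  by_contra hcon
  push Not at hcon
  nlinarith [mul_nonneg hb0.le hcon, mul_pos ha0 (neg_pos.2 h2), mul_nonneg hc0 (neg_pos.2 h1).le]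

theorem par_coef {u v : Pt} (hu : Pos u) (hv : Pos v) (h : det u v = 0) :
    ∃ α β : ℤ, 0 < α ∧ 0 < β ∧ β * u.1 = α * v.1 ∧ β * u.2 = α * v.2 := by
  obtain ⟨a1, a2⟩ := u
  obtain ⟨b1, b2⟩ := v
  simp only [Pos, lamLT, det] at *
  rcases hu with hu | ⟨hu, hu'⟩ <;> rcases hv with hv | ⟨hv, hv'⟩
  · exact ⟨a1, b1, hu, hv, by ring, by linarith⟩
  · exfalso; rw [← hv] at h; nlinarith
  · exfalso; rw [← hu] at h; nlinarith
  · exact ⟨-a2, -b2, by omega, by omega, by rw [← hu, ← hv]; ring, by ring⟩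

theorem par_det_left {u v a : Pt} (hu : Pos u) (hv : Pos v) (h : det u v = 0)
    (h1 : det a u < 0) : det a v < 0 := by
  obtain ⟨α, β, hα, hβ, e1, e2⟩ := par_coef hu hv h
  have : α * det a v = β * det a u := by
    simp only [det]; linear_combination a.2 * e1 - a.1 * e2
  nlinarith [mul_pos hβ (neg_pos.2 h1)]

theorem par_det_right {u v c : Pt} (hu : Pos u) (hv : Pos v) (h : det u v = 0)
    (h1 : det v c < 0) : det u c < 0 := by
  obtain ⟨α, β, hα, hβ, e1, e2⟩ := par_coef hu hv h
  have : β * det u c = α * det v c := by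
    simp only [det]; linear_combination c.2 * e1 - c.1 * e2
  nlinarith [mul_pos hα (neg_pos.2 h1)]

/-- intermediate points on a straight segment -/
theorem par_mem {D : Set Pt} (hD : Cvx D) {u v : Pt} (hu : Pos u) (hv : Pos v) (h : det u v = 0)
    {Q : Pt} (h1 : Q ∈ D) (h2 : Q + u + v ∈ D) : Q + u ∈ D ∧ Q + v ∈ D := by
  obtain ⟨α, β, hα, hβ, e1, e2⟩ := par_coef hu hv h
  constructor
  · refine hD Q (Q + u + v) (Q + u + v) _ β α 0 hβ.le hα.le le_rfl (by omega) ?_ ?_ h1 h2 h2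
    · simp only [Prod.fst_add]; linear_combination e1
    · simp only [Prod.snd_add]; linear_combination e2
  · refine hD Q (Q + u + v) (Q + u + v) _ α β 0 hα.le hβ.le le_rfl (by omega) ?_ ?_ h1 h2 h2
    · simp only [Prod.fst_add]; linear_combination -e1
    · simp only [Prod.snd_add]; linear_combination -e2

section Abstract

variable (D : Set Pt) (p : Pt) (F : List Pt → ℤ)

/-- Admissible step lists. -/
def Valid (w : List Pt) : Prop := (∀ v ∈ w, Pos v) ∧ InS D p w

/-- Right-hand side of the recursion. -/
def RR (l : List Pt) (u v : Pt) (r : List Pt) : ℤ :=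
  -det u v * F (l ++ (u + v) :: r) + if InS D p (l ++ v :: u :: r) then F (l ++ v :: u :: r) else 0

/-- The recursion holds at any turn. -/
def AA (w : List Pt) : Prop := ∀ l u v r, w = l ++ u :: v :: r → det u v < 0 → F w = RR D p F l u v r

/-- Invariance under swapping parallel steps. -/
def BB (w : List Pt) : Prop := ∀ l u v r, w = l ++ u :: v :: r → det u v = 0 →
  F w = F (l ++ v :: u :: r)

/-- There is a right turn. -/
def HasTurn (w : List Pt) : Prop := ∃ l u v r, w = l ++ u :: v :: r ∧ det u v < 0

variable {D p F}

theorem adj (hD : Cvx D) (l : List Pt) (a b c : Pt) (r : List Pt)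
    (IH : ∀ w', mlt w' (l ++ a :: b :: c :: r) → Valid D p w' → AA D p F w' ∧ BB F w')
    (hv : Valid D p (l ++ a :: b :: c :: r)) (h1 : det a b < 0) (h2 : det b c < 0) :
    RR D p F l a b (c :: r) = RR D p F (l ++ [a]) b c r := by
  obtain ⟨hpos, hin⟩ := hv
  have hl : ∀ v ∈ l, Pos v := fun v hv => hpos v (by simp [hv])
  have hr : ∀ v ∈ r, Pos v := fun v hv => hpos v (by simp [hv])
  have ha : Pos a := hpos a (by simp)
  have hb : Pos b := hpos b (by simp)
  have hc : Pos c := hpos c (by simp)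
  have h3 := det_trans ha hb hc h1 h2
  have hpos3 : ∀ x y z, Pos x → Pos y → Pos z → ∀ v ∈ l ++ x :: y :: z :: r, Pos v := by
    intro x y z hx hy hz v hv
    simp only [List.mem_append, List.mem_cons] at hv
    rcases hv with hv | rfl | rfl | rfl | hv
    exacts [hl _ hv, hx, hy, hz, hr _ hv]
  have hpos2 : ∀ x y, Pos x → Pos y → ∀ v ∈ l ++ x :: y :: r, Pos v := by
    intro x y hx hy v hv
    simp only [List.mem_append, List.mem_cons] at hv
    rcases hv with hv | rfl | rfl | hv
    exacts [hl _ hv, hx, hy, hr _ hv]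
  rw [in3] at hin
  set Q := p + l.sum with hQ
  obtain ⟨L, ia, iab, T⟩ := hin
  have hQD : Q ∈ D := InS_end L
  have hSD : Q + a + b + c ∈ D := InS_start T
  -- membership characterisations
  have in3' : ∀ x y z, x + y + z = a + b + c →
      (InS D p (l ++ x :: y :: z :: r) ↔ Q + x ∈ D ∧ Q + x + y ∈ D) := by
    intro x y z h
    rw [in3, ← hQ, show Q + x + y + z = Q + a + b + c by rw [add_assoc, add_assoc, add_assoc Q a, add_assoc Q, ← h]; abel]
    (clear IH; first | grind | tauto)
  have in2' : ∀ x y, x + y = a + b + c →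
      (InS D p (l ++ x :: y :: r) ↔ Q + x ∈ D) := by
    intro x y h
    rw [in2, ← hQ, show Q + x + y = Q + a + b + c by rw [add_assoc, h]; abel]
    (clear IH; first | grind | tauto)
  have eba : Q + b + a = Q + a + b := by abel
  have eca : Q + c + a = Q + a + c := by abel
  have ecb : Q + c + b = Q + b + c := by abel
  have i_bac : InS D p (l ++ b :: a :: c :: r) ↔ Q + b ∈ D := by
    rw [in3' _ _ _ (by abel), eba]; (clear IH; first | grind | tauto)
  have i_bca : InS D p (l ++ b :: c :: a :: r) ↔ Q + b ∈ D ∧ Q + b + c ∈ D := by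
    rw [in3' _ _ _ (by abel)]
  have i_cba : InS D p (l ++ c :: b :: a :: r) ↔ Q + c ∈ D ∧ Q + b + c ∈ D := by
    rw [in3' _ _ _ (by abel), ecb]
  have i_acb : InS D p (l ++ a :: c :: b :: r) ↔ Q + a + c ∈ D := by
    rw [in3' _ _ _ (by abel)]; (clear IH; first | grind | tauto)
  have i_cab : InS D p (l ++ c :: a :: b :: r) ↔ Q + c ∈ D ∧ Q + a + c ∈ D := by
    rw [in3' _ _ _ (by abel), eca]
  have i_ab_c : InS D p (l ++ (a + b) :: c :: r) := by
    rw [in2' _ _ (by abel), ← add_assoc]; exact iab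
  have i_c_ab : InS D p (l ++ c :: (a + b) :: r) ↔ Q + c ∈ D := in2' _ _ (by abel)
  have i_a_bc : InS D p (l ++ a :: (b + c) :: r) := by
    rw [in2' _ _ (by abel)]; exact ia
  have i_bc_a : InS D p (l ++ (b + c) :: a :: r) ↔ Q + b + c ∈ D := by
    rw [in2' _ _ (by abel), ← add_assoc]
  have i_b_ac : InS D p (l ++ b :: (a + c) :: r) ↔ Q + b ∈ D := in2' _ _ (by abel)
  have i_ac_b : InS D p (l ++ (a + c) :: b :: r) ↔ Q + a + c ∈ D := by
    rw [in2' _ _ (by abel), ← add_assoc]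
  -- measures
  have m2 : ∀ x y, mlt (l ++ x :: y :: r) (l ++ a :: b :: c :: r) := fun x y => by
    left; simp
  have v_bac : inv (l ++ b :: a :: c :: r) < inv (l ++ a :: b :: c :: r) := inv_push l _ _ _ h1
  have v_bca : inv (l ++ b :: c :: a :: r) < inv (l ++ b :: a :: c :: r) := by
    simpa using inv_push (l ++ [b]) r _ _ h3
  have v_acb : inv (l ++ a :: c :: b :: r) < inv (l ++ a :: b :: c :: r) := by
    simpa using inv_push (l ++ [a]) r _ _ h2
  have v_cab : inv (l ++ c :: a :: b :: r) < inv (l ++ a :: c :: b :: r) := inv_push l _ _ _ h3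
  have m3 : ∀ x y z, inv (l ++ x :: y :: z :: r) < inv (l ++ a :: b :: c :: r) →
      mlt (l ++ x :: y :: z :: r) (l ++ a :: b :: c :: r) := fun x y z h => by
    right; exact ⟨by simp, h⟩
  have esum1 : a + b + c = a + (b + c) := by abel
  have esum2 : b + (a + c) = a + b + c := by abel
  have esum3 : a + c + b = a + b + c := by abel
  -- expansions
  have e1 := (IH _ (m2 (a + b) c) ⟨hpos2 _ _ (Pos_add ha hb) hc, i_ab_c⟩).1 l (a + b) c r rfl
    (by simp only [det, Prod.fst_add, Prod.snd_add] at *; linarith)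
  have e2 : Q + b ∈ D → _ := fun h =>
    (IH _ (m3 b a c v_bac) ⟨hpos3 _ _ _ hb ha hc, i_bac.2 h⟩).1 (l ++ [b]) a c r (by simp) h3
  have e3 : Q + b ∈ D → Q + b + c ∈ D → _ := fun h h' =>
    (IH _ (m3 b c a (v_bca.trans v_bac)) ⟨hpos3 _ _ _ hb hc ha, i_bca.2 ⟨h, h'⟩⟩).1
      l b c (a :: r) rfl h2
  have f1 := (IH _ (m2 a (b + c)) ⟨hpos2 _ _ ha (Pos_add hb hc), i_a_bc⟩).1 l a (b + c) r rfl
    (by simp only [det, Prod.fst_add, Prod.snd_add] at *; linarith)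
  have f2 : Q + a + c ∈ D → _ := fun h =>
    (IH _ (m3 a c b v_acb) ⟨hpos3 _ _ _ ha hc hb, i_acb.2 h⟩).1 l a c (b :: r) rfl h3
  have f3 : Q + a + c ∈ D → Q + c ∈ D → _ := fun h h' =>
    (IH _ (m3 c a b (v_cab.trans v_acb)) ⟨hpos3 _ _ _ hc ha hb, i_cab.2 ⟨h', h⟩⟩).1
      (l ++ [c]) a b r (by simp) h1
  simp only [RR, List.append_assoc, List.cons_append, List.nil_append, i_bac, i_bca, i_cba, i_acb,
    i_cab, i_c_ab, i_bc_a, ← esum1] at e1 e2 e3 f1 f2 f3 ⊢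
  -- convexity facts
  have cr1 : -det a c * b.1 = -det b c * a.1 + -det a b * c.1 := by simp only [det]; ring
  have cr2 : -det a c * b.2 = -det b c * a.2 + -det a b * c.2 := by simp only [det]; ring
  have k1 : Q + c ∈ D → Q + a + c ∈ D := fun h => by
    refine hD (Q + a) (Q + c) (Q + a + b + c) _ (-det a b) (-det b c) (-det a c)
      (by omega) (by omega) (by omega) (by omega) ?_ ?_ ia h hSD
    · simp only [Prod.fst_add]; linear_combination -cr1
    · simp only [Prod.snd_add]; linear_combination -cr2
  have k2 : Q + b + c ∈ D → Q + b ∈ D := fun h => by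
    refine hD Q (Q + b + c) (Q + a + b) _ (-det a c) (-det a b) (-det b c)
      (by omega) (by omega) (by omega) (by omega) ?_ ?_ hQD h iab
    · simp only [Prod.fst_add]; linear_combination cr1
    · simp only [Prod.snd_add]; linear_combination cr2
  have k3 : -det a b ≤ -det b c → Q + b ∈ D := fun h => by
    refine hD Q (Q + a + b) (Q + a + b + c) _ (-det a c) (-det b c + det a b) (-det a b)
      (by omega) (by omega) (by omega) (by omega) ?_ ?_ hQD iab hSD
    · simp only [Prod.fst_add]; linear_combination cr1
    · simp only [Prod.snd_add]; linear_combination cr2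
  have k4 : -det b c ≤ -det a b → Q + a + c ∈ D := fun h => by
    refine hD Q (Q + a) (Q + a + b + c) _ (-det b c) (-det a b + det b c) (-det a c)
      (by omega) (by omega) (by omega) (by omega) ?_ ?_ hQD ia hSD
    · simp only [Prod.fst_add]; linear_combination -cr1
    · simp only [Prod.snd_add]; linear_combination -cr2
  have dd1 : det b (a + c) = - det a b + det b c := by
    simp only [det, Prod.fst_add, Prod.snd_add]; ring
  have dd2 : det (a + c) b = det a b - det b c := by
    simp only [det, Prod.fst_add, Prod.snd_add]; ring
  have g : (-det a b + det b c) * F (l ++ (a + b + c) :: r) +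
      (if Q + b ∈ D then F (l ++ b :: (a + c) :: r) else 0) -
      (if Q + a + c ∈ D then F (l ++ (a + c) :: b :: r) else 0) = 0 := by
    rcases lt_trichotomy (det b (a + c)) 0 with h | h | h
    · have hb' : Q + b ∈ D := k3 (by omega)
      have := (IH _ (m2 b (a + c)) ⟨hpos2 _ _ hb (Pos_add ha hc), i_b_ac.2 hb'⟩).1 l _ _ r rfl h
      simp only [RR, i_ac_b, esum2] at this
      rw [if_pos hb', this, dd1]
      ring
    · have hb' : Q + b ∈ D := k3 (by omega)
      have hac' : Q + a + c ∈ D := k4 (by omega)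
      have := (IH _ (m2 b (a + c)) ⟨hpos2 _ _ hb (Pos_add ha hc), i_b_ac.2 hb'⟩).2 l _ _ r rfl h
      rw [if_pos hb', if_pos hac', this, ← dd1, h]
      ring
    · have hac' : Q + a + c ∈ D := k4 (by omega)
      have := (IH _ (m2 (a + c) b) ⟨hpos2 _ _ (Pos_add ha hc) hb, i_ac_b.2 hac'⟩).1 l _ _ r rfl
        (by omega)
      simp only [RR, i_b_ac, esum3] at this
      rw [if_pos hac', this, dd2]
      ring
  have d3 : det (a + b) c = det a c + det b c := by
    simp only [det, Prod.fst_add, Prod.snd_add]; ring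
  have d4 : det a (b + c) = det a b + det a c := by
    simp only [det, Prod.fst_add, Prod.snd_add]; ring
  rw [e1, f1, d3, d4]
  clear e1 f1 IH in3' in2' i_bac i_bca i_cba i_acb i_cab i_ab_c i_c_ab i_a_bc i_bc_a i_b_ac i_ac_b
  by_cases hc' : Q + c ∈ D <;> by_cases hbc' : Q + b + c ∈ D <;> by_cases hb' : Q + b ∈ D <;>
    by_cases hac' : Q + a + c ∈ D <;>
    first
    | exact absurd (k1 hc') hac'
    | exact absurd (k2 hbc') hb'
    | (simp only [hc', hbc', hb', hac', if_true, if_false, true_and, and_true, and_false, and_self,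
        true_implies, false_implies] at e2 e3 f2 f3 g ⊢
       try rw [e2]
       try rw [e3]
       try rw [f2]
       try rw [f3]
       linear_combination -det a c * g)

set_option maxHeartbeats 1600000 in
theorem far (l : List Pt) (a b : Pt) (m : List Pt) (x y : Pt) (r : List Pt)
    (IH : ∀ w', mlt w' (l ++ a :: b :: (m ++ x :: y :: r)) → Valid D p w' →
      AA D p F w' ∧ BB F w')
    (hv : Valid D p (l ++ a :: b :: (m ++ x :: y :: r))) (h1 : det a b < 0) (h2 : det x y < 0) :
    RR D p F l a b (m ++ x :: y :: r) = RR D p F (l ++ a :: b :: m) x y r := by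
  obtain ⟨hpos, hin⟩ := hv
  have hpab : Pos (a + b) := Pos_add (hpos a (by simp)) (hpos b (by simp))
  have hpxy : Pos (x + y) := Pos_add (hpos x (by simp)) (hpos y (by simp))
  rw [in2, in2] at hin
  obtain ⟨L, ia, M, ix, T⟩ := hin
  set Q := p + l.sum with hQ
  set Q' := Q + a + b + m.sum with hQ'
  have eab : Q + b + a = Q + a + b := by abel
  have eab' : Q + (a + b) = Q + a + b := by abel
  have exy : Q' + y + x = Q' + x + y := by abel
  have exy' : Q' + (x + y) = Q' + x + y := by abel
  have j1 : InS D p (l ++ b :: a :: (m ++ x :: y :: r)) ↔ Q + b ∈ D := by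
    rw [in2, in2, ← hQ, eab, ← hQ']; (clear IH; first | grind | tauto)
  have j2 : InS D p (l ++ a :: b :: (m ++ y :: x :: r)) ↔ Q' + y ∈ D := by
    rw [in2, in2, ← hQ, ← hQ', exy]; (clear IH; first | grind | tauto)
  have j3 : InS D p (l ++ b :: a :: (m ++ y :: x :: r)) ↔ Q + b ∈ D ∧ Q' + y ∈ D := by
    rw [in2, in2, ← hQ, eab, ← hQ', exy]; (clear IH; first | grind | tauto)
  have j4 : InS D p (l ++ (a + b) :: (m ++ x :: y :: r)) := by
    rw [in1, in2, ← hQ, eab', ← hQ']; (clear IH; first | grind | tauto)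
  have j5 : InS D p (l ++ (a + b) :: (m ++ y :: x :: r)) ↔ Q' + y ∈ D := by
    rw [in1, in2, ← hQ, eab', ← hQ', exy]; (clear IH; first | grind | tauto)
  have j6 : InS D p (l ++ a :: b :: (m ++ (x + y) :: r)) := by
    rw [in2, in1, ← hQ, ← hQ', exy']; (clear IH; first | grind | tauto)
  have j7 : InS D p (l ++ b :: a :: (m ++ (x + y) :: r)) ↔ Q + b ∈ D := by
    rw [in2, in1, ← hQ, eab, ← hQ', exy']; (clear IH; first | grind | tauto)
  have e1 := (IH (l ++ (a + b) :: (m ++ x :: y :: r)) (by left; simp)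
    ⟨by intro v hv; simp only [List.mem_append, List.mem_cons] at hv hpos; rcases hv with hv | rfl | hv | hv | hv | hv
        exacts [hpos _ (by (clear IH; first | grind | tauto)), hpab, hpos _ (by (clear IH; tauto)), hpos _ (by (clear IH; tauto)), hpos _ (by (clear IH; tauto)), hpos _ (by (clear IH; tauto))], j4⟩).1
      (l ++ (a + b) :: m) x y r (by simp) h2
  have e2 : Q + b ∈ D → _ := fun h => (IH (l ++ b :: a :: (m ++ x :: y :: r))
    (Or.inr ⟨by simp, inv_push _ _ _ _ h1⟩)
    ⟨by intro v hv; apply hpos; simp only [List.mem_append, List.mem_cons] at hv ⊢; (clear IH; first | grind | tauto), j1.2 h⟩).1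
      (l ++ b :: a :: m) x y r (by simp) h2
  have f1 := (IH (l ++ a :: b :: (m ++ (x + y) :: r)) (by left; simp)
    ⟨by intro v hv; simp only [List.mem_append, List.mem_cons] at hv hpos; rcases hv with hv | hv | hv | hv | rfl | hv
        exacts [hpos _ (by (clear IH; first | grind | tauto)), hpos _ (by (clear IH; tauto)), hpos _ (by (clear IH; tauto)), hpos _ (by (clear IH; tauto)), hpxy, hpos _ (by (clear IH; tauto))], j6⟩).1
      l a b _ rfl h1
  have f2 : Q' + y ∈ D → _ := fun h => (IH (l ++ a :: b :: (m ++ y :: x :: r))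
    (Or.inr ⟨by simp, by simpa using inv_push (l ++ a :: b :: m) r _ _ h2⟩)
    ⟨by intro v hv; apply hpos; simp only [List.mem_append, List.mem_cons] at hv ⊢; (clear IH; first | grind | tauto), j2.2 h⟩).1
      l a b _ rfl h1
  simp only [RR, List.append_assoc, List.cons_append, List.nil_append, j1, j2, j3, j5, j7]
    at e1 e2 f1 f2 ⊢
  rw [e1, f1]
  clear j1 j2 j3 j4 j5 j6 j7 IH
  by_cases hb' : Q + b ∈ D <;> by_cases hy' : Q' + y ∈ D <;>
    (simp only [hb', hy', if_true, if_false, true_and, and_true, and_false, false_and, and_self,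
        true_implies, false_implies] at e2 f2 ⊢
     try rw [e2]
     try rw [f2]
     ring)

theorem pos_cases {l₁ r₁ l r : List Pt} {x y u v : Pt}
    (h : l₁ ++ x :: y :: r₁ = l ++ u :: v :: r) :
    (∃ m, l = l₁ ++ x :: y :: m ∧ r₁ = m ++ u :: v :: r) ∨
    (l = l₁ ++ [x] ∧ y = u ∧ r₁ = v :: r) ∨
    (l₁ = l ∧ x = u ∧ y = v ∧ r₁ = r) ∨
    (l₁ = l ++ [u] ∧ x = v ∧ r = y :: r₁) ∨
    (∃ m, l₁ = l ++ u :: v :: m ∧ r = m ++ x :: y :: r₁) := by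
  induction l₁ generalizing l with
  | nil =>
    rcases l with _ | ⟨a, _ | ⟨b, l⟩⟩ <;> simp at h ⊢ <;> grind
  | cons c l₁ ih =>
    rcases l with _ | ⟨a, l⟩
    · rcases l₁ with _ | ⟨d, l₁⟩ <;> simp at h ⊢ <;> grind
    · simp only [List.cons_append, List.cons.injEq] at h
      have := ih h.2
      grind

theorem Valid_cut {l r : List Pt} {x y : Pt} (h : Valid D p (l ++ x :: y :: r)) :
    Valid D p (l ++ (x + y) :: r) := by
  obtain ⟨hpos, hin⟩ := h
  constructor
  · intro v hv
    have hxy : Pos (x + y) := Pos_add (hpos x (by simp)) (hpos y (by simp))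
    simp only [List.mem_append, List.mem_cons] at hv hpos
    rcases hv with hv | rfl | hv
    exacts [hpos _ (by tauto), hxy, hpos _ (by tauto)]
  · rw [in2] at hin
    rw [in1, ← add_assoc]
    exact ⟨hin.1, hin.2.2⟩

theorem Valid_swap {l r : List Pt} {x y : Pt} (h : Valid D p (l ++ x :: y :: r))
    (hin : InS D p (l ++ y :: x :: r)) : Valid D p (l ++ y :: x :: r) := by
  refine ⟨fun v hv => h.1 v ?_, hin⟩
  simp only [List.mem_append, List.mem_cons] at hv ⊢
  tauto

theorem parIn (hD : Cvx D) {l r : List Pt} {u v : Pt} (hu : Pos u) (hv : Pos v)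
    (h : det u v = 0) (hin : InS D p (l ++ u :: v :: r)) : InS D p (l ++ v :: u :: r) := by
  rw [in2] at hin ⊢
  obtain ⟨h1, h2, h3⟩ := hin
  refine ⟨h1, (par_mem hD hu hv h (InS_end h1) (InS_start h3)).2, ?_⟩
  rwa [show p + l.sum + v + u = p + l.sum + u + v by abel]

theorem parIn_iff (hD : Cvx D) {l r : List Pt} {u v : Pt} (hu : Pos u) (hv : Pos v)
    (h : det u v = 0) : InS D p (l ++ u :: v :: r) ↔ InS D p (l ++ v :: u :: r) :=
  ⟨parIn hD hu hv h, parIn hD hv hu (by rw [det_anti, h]; rfl)⟩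

set_option maxHeartbeats 1600000 in
/-- right turn followed by two parallel steps -/
theorem B_left (hD : Cvx D) (l : List Pt) (a u v : Pt) (r : List Pt)
    (IH : ∀ w', mlt w' (l ++ a :: u :: v :: r) → Valid D p w' → AA D p F w' ∧ BB F w')
    (hV : Valid D p (l ++ a :: u :: v :: r))
    (hA : AA D p F (l ++ a :: u :: v :: r)) (hA' : AA D p F (l ++ a :: v :: u :: r))
    (h0 : det u v = 0) (h1 : det a u < 0) :
    F (l ++ a :: u :: v :: r) = F (l ++ a :: v :: u :: r) := by
  have ha : Pos a := hV.1 a (by simp)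
  have hu : Pos u := hV.1 u (by simp)
  have hv : Pos v := hV.1 v (by simp)
  have h2 : det a v < 0 := par_det_left hu hv h0 h1
  have h0' : det v u = 0 := by rw [det_anti, h0]; rfl
  have hV' : Valid D p (l ++ a :: v :: u :: r) := by
    have := Valid_swap (l := l ++ [a]) (by simpa using hV)
      (parIn hD hu hv h0 (l := l ++ [a]) (r := r) (by simpa using hV.2))
    simpa using this
  have VL : inv (l ++ a :: v :: u :: r) = inv (l ++ a :: u :: v :: r) := by
    simpa using inv_par (l ++ [a]) r u v h0
  have m2 : ∀ x y, mlt (l ++ x :: y :: r) (l ++ a :: u :: v :: r) := fun x y => by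
    left; simp
  have m3 : ∀ x y z, inv (l ++ x :: y :: z :: r) < inv (l ++ a :: u :: v :: r) →
      mlt (l ++ x :: y :: z :: r) (l ++ a :: u :: v :: r) := fun x y z h => by
    right; exact ⟨by simp, h⟩
  have w1 : inv (l ++ u :: a :: v :: r) < inv (l ++ a :: u :: v :: r) := inv_push l _ _ _ h1
  have w2 : inv (l ++ u :: v :: a :: r) < inv (l ++ u :: a :: v :: r) := by
    simpa using inv_push (l ++ [u]) r _ _ h2
  have w3 : inv (l ++ v :: a :: u :: r) < inv (l ++ a :: u :: v :: r) := by
    rw [← VL]; exact inv_push l _ _ _ h2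
  have hin := hV.2
  have hin' := hV'.2
  rw [in3] at hin hin'
  set Q := p + l.sum with hQ
  obtain ⟨L, ia, iab, T⟩ := hin
  obtain ⟨-, -, iav, -⟩ := hin'
  have hQD : Q ∈ D := InS_end L
  have ea : Q + u + a = Q + a + u := by abel
  have ea' : Q + v + a = Q + a + v := by abel
  have euv : Q + v + u = Q + u + v := by abel
  have in3' : ∀ x y z, x + y + z = a + u + v →
      (InS D p (l ++ x :: y :: z :: r) ↔ Q + x ∈ D ∧ Q + x + y ∈ D) := by
    intro x y z h
    rw [in3, ← hQ, show Q + x + y + z = Q + a + u + v by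
      rw [add_assoc, add_assoc, add_assoc Q a, add_assoc Q, ← h]; abel]
    (clear IH hA hA'; first | grind | tauto)
  have in2' : ∀ x y, x + y = a + u + v →
      (InS D p (l ++ x :: y :: r) ↔ Q + x ∈ D) := by
    intro x y h
    rw [in2, ← hQ, show Q + x + y = Q + a + u + v by rw [add_assoc, h]; abel]
    (clear IH hA hA'; first | grind | tauto)
  have i1 : InS D p (l ++ u :: a :: v :: r) ↔ Q + u ∈ D := by
    rw [in3' _ _ _ (by abel), ea]; (clear IH hA hA'; first | grind | tauto)
  have i2 : InS D p (l ++ v :: a :: u :: r) ↔ Q + v ∈ D := by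
    rw [in3' _ _ _ (by abel), ea']; (clear IH hA hA'; first | grind | tauto)
  have i3 : InS D p (l ++ u :: v :: a :: r) ↔ Q + u ∈ D ∧ Q + u + v ∈ D := by
    rw [in3' _ _ _ (by abel)]
  have i4 : InS D p (l ++ v :: u :: a :: r) ↔ Q + v ∈ D ∧ Q + u + v ∈ D := by
    rw [in3' _ _ _ (by abel), euv]
  have i5 : InS D p (l ++ u :: (a + v) :: r) ↔ Q + u ∈ D := in2' _ _ (by abel)
  have i6 : InS D p (l ++ v :: (a + u) :: r) ↔ Q + v ∈ D := in2' _ _ (by abel)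
  have d1 : det (a + u) v = det a v := by
    simp only [det, Prod.fst_add, Prod.snd_add] at *; linarith
  have d2 : det (a + v) u = det a u := by
    simp only [det, Prod.fst_add, Prod.snd_add] at *; linarith
  have E := hA l a u _ rfl h1
  have E' := hA' l a v _ rfl h2
  have e1 := (IH _ (m2 (a + u) v) (Valid_cut hV)).1 l _ _ _ rfl (by omega)
  have e2 : Q + u ∈ D → _ := fun h => (IH _ (m3 u a v w1) (Valid_swap hV (i1.2 h))).1
    (l ++ [u]) a v r (by simp) h2
  have f1 := (IH _ (m2 (a + v) u) (Valid_cut hV')).1 l _ _ _ rfl (by omega)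
  have f2 : Q + v ∈ D → _ := fun h => (IH _ (m3 v a u w3) (Valid_swap hV' (i2.2 h))).1
    (l ++ [v]) a u r (by simp) h1
  have g : Q + u ∈ D → Q + u + v ∈ D → _ := fun h h' =>
    (IH _ (m3 u v a (w2.trans w1)) ⟨by
      intro z hz; apply hV.1; simp only [List.mem_append, List.mem_cons] at hz ⊢; (clear IH hA hA'; first | grind | tauto),
      i3.2 ⟨h, h'⟩⟩).2 l u v (a :: r) rfl h0
  have k : Q + u + v ∈ D → Q + u ∈ D ∧ Q + v ∈ D := fun h => par_mem hD hu hv h0 hQD h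
  have es : a + v + u = a + u + v := by abel
  simp only [RR, List.append_assoc, List.cons_append, List.nil_append, i1, i2, i3, i4, i5, i6, d1,
    d2, es] at E E' e1 e2 f1 f2
  rw [E, E', e1, f1]
  clear i1 i2 i3 i4 i5 i6 in2' in3' IH hA hA' E E' e1 f1 hV hV' m2 m3
  by_cases huv : Q + u + v ∈ D
  · obtain ⟨hu', hv'⟩ := k huv
    simp only [hu', hv', huv, if_true, true_and, and_true, and_self, true_implies] at e2 f2 g ⊢
    rw [e2, f2, g]; ring
  · by_cases hu' : Q + u ∈ D <;> by_cases hv' : Q + v ∈ D <;>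
    (simp only [hu', hv', huv, if_true, if_false, true_and, and_true, and_false, and_self,
      true_implies, false_implies] at e2 f2 ⊢
     try rw [e2]
     try rw [f2]
     ring)

set_option maxHeartbeats 1600000 in
/-- two parallel steps followed by a right turn -/
theorem B_right (hD : Cvx D) (l : List Pt) (u v c : Pt) (r : List Pt)
    (IH : ∀ w', mlt w' (l ++ u :: v :: c :: r) → Valid D p w' → AA D p F w' ∧ BB F w')
    (hV : Valid D p (l ++ u :: v :: c :: r))
    (hA : AA D p F (l ++ u :: v :: c :: r)) (hA' : AA D p F (l ++ v :: u :: c :: r))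
    (h0 : det u v = 0) (h1 : det v c < 0) :
    F (l ++ u :: v :: c :: r) = F (l ++ v :: u :: c :: r) := by
  have hc : Pos c := hV.1 c (by simp)
  have hu : Pos u := hV.1 u (by simp)
  have hv : Pos v := hV.1 v (by simp)
  have h2 : det u c < 0 := par_det_right hu hv h0 h1
  have hV' : Valid D p (l ++ v :: u :: c :: r) := Valid_swap hV (parIn hD hu hv h0 hV.2)
  have VL : inv (l ++ v :: u :: c :: r) = inv (l ++ u :: v :: c :: r) := inv_par l _ u v h0
  have m2 : ∀ x y, mlt (l ++ x :: y :: r) (l ++ u :: v :: c :: r) := fun x y => by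
    left; simp
  have m3 : ∀ x y z, inv (l ++ x :: y :: z :: r) < inv (l ++ u :: v :: c :: r) →
      mlt (l ++ x :: y :: z :: r) (l ++ u :: v :: c :: r) := fun x y z h => by
    right; exact ⟨by simp, h⟩
  have w1 : inv (l ++ u :: c :: v :: r) < inv (l ++ u :: v :: c :: r) := by
    simpa using inv_push (l ++ [u]) r _ _ h1
  have w2 : inv (l ++ c :: u :: v :: r) < inv (l ++ u :: c :: v :: r) := inv_push l _ _ _ h2
  have w3 : inv (l ++ v :: c :: u :: r) < inv (l ++ u :: v :: c :: r) := by
    rw [← VL]; simpa using inv_push (l ++ [v]) r _ _ h2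
  have hin := hV.2
  have hin' := hV'.2
  rw [in3] at hin hin'
  set Q := p + l.sum with hQ
  obtain ⟨L, iu, iuv, T⟩ := hin
  obtain ⟨-, iv, -, -⟩ := hin'
  have hQD : Q ∈ D := InS_end L
  have hSD := InS_start T
  have ea : Q + c + u = Q + u + c := by abel
  have ea' : Q + c + v = Q + v + c := by abel
  have in3' : ∀ x y z, x + y + z = u + v + c →
      (InS D p (l ++ x :: y :: z :: r) ↔ Q + x ∈ D ∧ Q + x + y ∈ D) := by
    intro x y z h
    rw [in3, ← hQ, show Q + x + y + z = Q + u + v + c by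
      rw [add_assoc, add_assoc, add_assoc Q u, add_assoc Q, ← h]; abel]
    (clear IH hA hA'; first | grind | tauto)
  have in2' : ∀ x y, x + y = u + v + c →
      (InS D p (l ++ x :: y :: r) ↔ Q + x ∈ D) := by
    intro x y h
    rw [in2, ← hQ, show Q + x + y = Q + u + v + c by rw [add_assoc, h]; abel]
    (clear IH hA hA'; first | grind | tauto)
  have i1 : InS D p (l ++ u :: c :: v :: r) ↔ Q + u + c ∈ D := by
    rw [in3' _ _ _ (by abel)]; (clear IH hA hA'; first | grind | tauto)
  have i2 : InS D p (l ++ v :: c :: u :: r) ↔ Q + v + c ∈ D := by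
    rw [in3' _ _ _ (by abel)]; (clear IH hA hA'; first | grind | tauto)
  have i3 : InS D p (l ++ c :: u :: v :: r) ↔ Q + c ∈ D ∧ Q + u + c ∈ D := by
    rw [in3' _ _ _ (by abel), ea]
  have i4 : InS D p (l ++ c :: v :: u :: r) ↔ Q + c ∈ D ∧ Q + v + c ∈ D := by
    rw [in3' _ _ _ (by abel), ea']
  have i5 : InS D p (l ++ (v + c) :: u :: r) ↔ Q + v + c ∈ D := by
    rw [in2' _ _ (by abel), ← add_assoc]
  have i6 : InS D p (l ++ (u + c) :: v :: r) ↔ Q + u + c ∈ D := by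
    rw [in2' _ _ (by abel), ← add_assoc]
  have d1 : det u (v + c) = det u c := by
    simp only [det, Prod.fst_add, Prod.snd_add] at *; linarith
  have d2 : det v (u + c) = det v c := by
    simp only [det, Prod.fst_add, Prod.snd_add] at *; linarith
  have E := hA (l ++ [u]) v c r (by simp) h1
  have E' := hA' (l ++ [v]) u c r (by simp) h2
  have hVc : Valid D p (l ++ u :: (v + c) :: r) := by
    simpa using Valid_cut (l := l ++ [u]) (x := v) (y := c) (r := r) (by simpa using hV)
  have hVc' : Valid D p (l ++ v :: (u + c) :: r) := by
    simpa using Valid_cut (l := l ++ [v]) (x := u) (y := c) (r := r) (by simpa using hV')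
  have hVs : ∀ x y z, (x = u ∨ x = v ∨ x = c) → (y = u ∨ y = v ∨ y = c) →
      (z = u ∨ z = v ∨ z = c) → InS D p (l ++ x :: y :: z :: r) →
      Valid D p (l ++ x :: y :: z :: r) := by
    intro x y z hx hy hz h
    have hP : ∀ t, (t = u ∨ t = v ∨ t = c) → Pos t := by
      rintro t (rfl | rfl | rfl)
      exacts [hu, hv, hc]
    refine ⟨fun t ht => ?_, h⟩
    simp only [List.mem_append, List.mem_cons] at ht
    rcases ht with ht | rfl | rfl | rfl | ht
    exacts [hV.1 t (by simp [ht]), hP _ hx, hP _ hy, hP _ hz, hV.1 t (by simp [ht])]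
  have e1 := (IH _ (m2 u (v + c)) hVc).1 l _ _ _ rfl (by omega)
  have e2 : Q + u + c ∈ D → _ := fun h => (IH _ (m3 u c v w1) (hVs _ _ _ (by simp) (by simp)
    (by simp) (i1.2 h))).1 l u c _ rfl h2
  have f1 := (IH _ (m2 v (u + c)) hVc').1 l _ _ _ rfl (by omega)
  have f2 : Q + v + c ∈ D → _ := fun h => (IH _ (m3 v c u w3) (hVs _ _ _ (by simp) (by simp)
    (by simp) (i2.2 h))).1 l v c _ rfl h1
  have g : Q + c ∈ D → Q + u + c ∈ D → _ := fun h h' =>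
    (IH _ (m3 c u v (w2.trans w1)) (hVs _ _ _ (by simp) (by simp)
    (by simp) (i3.2 ⟨h, h'⟩))).2 (l ++ [c]) u v r (by simp) h0
  have k : Q + c ∈ D → Q + u + c ∈ D ∧ Q + v + c ∈ D := fun h => by
    have := par_mem hD hu hv h0 h
      (by rwa [show Q + c + u + v = Q + u + v + c by abel])
    rwa [ea, ea'] at this
  have es : v + (u + c) = u + (v + c) := by abel
  simp only [RR, List.append_assoc, List.cons_append, List.nil_append, i1, i2, i3, i4, i5, i6, d1,
    d2, es] at E E' e1 e2 f1 f2 g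
  rw [E, E', e1, f1]
  clear i1 i2 i3 i4 i5 i6 in2' in3' IH hA hA' E E' e1 f1 hV hV' m2 m3 hVs
  by_cases hc' : Q + c ∈ D
  · obtain ⟨hu', hv'⟩ := k hc'
    simp only [hu', hv', hc', if_true, true_and, and_true, and_self, true_implies] at e2 f2 g ⊢
    rw [e2, f2, g]; ring
  · by_cases hu' : Q + u + c ∈ D <;> by_cases hv' : Q + v + c ∈ D <;>
    (simp only [hu', hv', hc', if_true, if_false, true_and, and_true, false_and, and_self,
      true_implies, false_implies] at e2 f2 ⊢
     try rw [e2]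
     try rw [f2]
     ring)

theorem B_turn (hD : Cvx D) (l : List Pt) (u v : Pt) (r : List Pt)
    (IH : ∀ w', mlt w' (l ++ u :: v :: r) → Valid D p w' → AA D p F w' ∧ BB F w')
    (hV : Valid D p (l ++ u :: v :: r))
    (hA : AA D p F (l ++ u :: v :: r)) (hA' : AA D p F (l ++ v :: u :: r))
    (h0 : det u v = 0) (hT : HasTurn (l ++ u :: v :: r)) :
    F (l ++ u :: v :: r) = F (l ++ v :: u :: r) := by
  have hu : Pos u := hV.1 u (by simp)
  have hv : Pos v := hV.1 v (by simp)
  obtain ⟨l₁, x, y, r₁, he, hxy⟩ := hT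
  rcases pos_cases he.symm with ⟨m, rfl, rfl⟩ | ⟨rfl, rfl, rfl⟩ | ⟨rfl, rfl, rfl, rfl⟩ |
    ⟨rfl, rfl, rfl⟩ | ⟨m, rfl, rfl⟩
  · have E := hA l₁ x y (m ++ u :: v :: r) (by simp) hxy
    have E' := hA' l₁ x y (m ++ v :: u :: r) (by simp) hxy
    rw [E, E']
    have hV2 : Valid D p (l₁ ++ x :: y :: (m ++ u :: v :: r)) := by simpa using hV
    have b1 := (IH (l₁ ++ (x + y) :: (m ++ u :: v :: r)) (by left; simp) (Valid_cut hV2)).2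
      (l₁ ++ (x + y) :: m) u v r (by simp) h0
    have b2 : InS D p (l₁ ++ y :: x :: (m ++ u :: v :: r)) → _ := fun h =>
      (IH (l₁ ++ y :: x :: (m ++ u :: v :: r))
      (by right; exact ⟨by simp, by simpa using inv_push l₁ (m ++ u :: v :: r) _ _ hxy⟩)
      (Valid_swap hV2 h)).2 (l₁ ++ y :: x :: m) u v r (by simp) h0
    have b3 := parIn_iff (p := p) hD hu hv h0 (l := l₁ ++ y :: x :: m) (r := r)
    simp only [List.append_assoc, List.cons_append] at b1 b2 b3
    simp only [RR]
    rw [b1, ← b3]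
    split_ifs with h
    · rw [b2 h]
    · rfl
  · have := B_left hD l₁ x y v r (F := F) (p := p) (by simpa using IH) (by simpa using hV)
      (by simpa using hA) (by simpa using hA') h0 hxy
    simpa using this
  · omega
  · exact B_right hD l u x y r₁ IH hV hA hA' h0 hxy
  · have E := hA (l ++ u :: v :: m) x y r₁ (by simp) hxy
    have E' := hA' (l ++ v :: u :: m) x y r₁ (by simp) hxy
    rw [E, E']
    have hV2 : Valid D p ((l ++ u :: v :: m) ++ x :: y :: r₁) := by simpa using hV
    have b1 := (IH ((l ++ u :: v :: m) ++ (x + y) :: r₁) (by left; simp) (Valid_cut hV2)).2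
      l u v (m ++ (x + y) :: r₁) (by simp) h0
    have b2 : InS D p ((l ++ u :: v :: m) ++ y :: x :: r₁) → _ := fun h =>
      (IH ((l ++ u :: v :: m) ++ y :: x :: r₁)
      (by right; exact ⟨by simp, by simpa using inv_push (l ++ u :: v :: m) r₁ _ _ hxy⟩)
      (Valid_swap hV2 h)).2 l u v (m ++ y :: x :: r₁) (by simp) h0
    have b3 := parIn_iff (p := p) hD hu hv h0 (l := l) (r := m ++ y :: x :: r₁)
    simp only [List.append_assoc, List.cons_append] at b1 b2 b3
    simp only [RR, List.append_assoc, List.cons_append]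
    rw [b1, ← b3]
    split_ifs with h
    · rw [b2 h]
    · rfl

theorem A_all (hD : Cvx D)
    (hfirst : ∀ w, HasTurn w → ∃ l u v r, w = l ++ u :: v :: r ∧ det u v < 0 ∧
      F w = RR D p F l u v r) (w : List Pt)
    (IH : ∀ w', mlt w' w → Valid D p w' → AA D p F w' ∧ BB F w')
    (hV : Valid D p w) : AA D p F w := by
  intro l u v r he hd
  obtain ⟨l₁, x, y, r₁, he₁, hxy, hF⟩ := hfirst w ⟨l, u, v, r, he, hd⟩
  rw [hF]
  rcases pos_cases (he₁.symm.trans he) with ⟨m, rfl, rfl⟩ | ⟨rfl, rfl, rfl⟩ |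
    ⟨rfl, rfl, rfl, rfl⟩ | ⟨rfl, rfl, rfl⟩ | ⟨m, rfl, rfl⟩
  · subst he₁
    exact far l₁ x y m u v r IH hV hxy hd
  · subst he₁
    exact adj hD l₁ x y v r IH hV hxy hd
  · rfl
  · subst he
    exact (adj hD l u x y r₁ IH hV hd hxy).symm
  · subst he
    exact (far l u v m x y r₁ IH hV hd hxy).symm

theorem AB_all (hD : Cvx D)
    (hfirst : ∀ w, HasTurn w → ∃ l u v r, w = l ++ u :: v :: r ∧ det u v < 0 ∧
      F w = RR D p F l u v r)
    (hnone : ∀ l u v r, (∀ z ∈ l ++ u :: v :: r, Pos z) → det u v = 0 →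
      ¬ HasTurn (l ++ u :: v :: r) → ¬ HasTurn (l ++ v :: u :: r) →
      F (l ++ u :: v :: r) = F (l ++ v :: u :: r)) :
    ∀ (n m : ℕ) (w : List Pt), w.length = n → inv w = m → Valid D p w →
      AA D p F w ∧ BB F w := by
  intro n
  induction n using Nat.strong_induction_on with
  | _ n ihn =>
    intro m
    induction m using Nat.strong_induction_on with
    | _ m ihm =>
      have IH : ∀ w : List Pt, w.length = n → inv w = m →
          ∀ w', mlt w' w → Valid D p w' → AA D p F w' ∧ BB F w' := by
        intro w hn hm w' h hV
        rcases h with h | ⟨h, h'⟩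
        · exact ihn _ (hn ▸ h) _ w' rfl rfl hV
        · exact ihm _ (hm ▸ h') w' (h.trans hn) rfl hV
      intro w hn hm hV
      refine ⟨A_all hD hfirst w (IH w hn hm) hV, ?_⟩
      rintro l u v r rfl h0
      have hu : Pos u := hV.1 u (by simp)
      have hv : Pos v := hV.1 v (by simp)
      have h0' : det v u = 0 := by rw [det_anti, h0]; rfl
      have hV' := Valid_swap hV (parIn hD hu hv h0 hV.2)
      have hn' : (l ++ v :: u :: r).length = n := by rw [← hn]; simp
      have hm' : inv (l ++ v :: u :: r) = m := by rw [← hm]; exact inv_par _ _ _ _ h0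
      have hA := A_all hD hfirst _ (IH _ hn hm) hV
      have hA' := A_all hD hfirst _ (IH _ hn' hm') hV'
      by_cases hT : HasTurn (l ++ u :: v :: r)
      · exact B_turn hD l u v r (IH _ hn hm) hV hA hA' h0 hT
      · by_cases hT' : HasTurn (l ++ v :: u :: r)
        · exact (B_turn hD l v u r (IH _ hn' hm') hV' hA' hA h0' hT').symm
        · exact hnone l u v r hV.1 h0 hT hT'

end Abstract
/-! ## Translation between paths and step lists -/

theorem pathFrom_length (p : Pt) (w : List Pt) : (pathFrom p w).length = w.length + 1 := by
  induction w generalizing p with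
  | nil => rfl
  | cons v w ih => simp [pathFrom, ih]

theorem pathFrom_cons (p : Pt) (w : List Pt) : ∃ t, pathFrom p w = p :: t := by
  cases w <;> simp [pathFrom]

theorem exists_steps (γ : List Pt) (p : Pt) (h : γ.head? = some p) : ∃ w, γ = pathFrom p w := by
  induction γ generalizing p with
  | nil => simp at h
  | cons a γ ih =>
    simp only [List.head?_cons, Option.some.injEq] at h
    subst h
    cases γ with
    | nil => exact ⟨[], rfl⟩
    | cons b γ =>
      obtain ⟨w, hw⟩ := ih b rfl
      exact ⟨(b - a) :: w, by simp [pathFrom, hw]⟩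

theorem pt_pathFrom_append (p : Pt) (l m : List Pt) (i : ℕ) :
    pt (pathFrom p (l ++ m)) (l.length + i) = pt (pathFrom (p + l.sum) m) i := by
  induction l generalizing p with
  | nil => simp
  | cons a l ih =>
    have := ih (p + a)
    simp only [List.cons_append, pathFrom, List.length_cons, List.sum_cons, ← add_assoc]
    rw [← this, show l.length + 1 + i = (l.length + i) + 1 by omega]
    simp [pt]

theorem pt0 (p : Pt) (w : List Pt) : pt (pathFrom p w) 0 = p := by
  cases w <;> simp [pathFrom, pt]

theorem pt1 (p u : Pt) (w : List Pt) : pt (pathFrom p (u :: w)) 1 = p + u := by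
  cases w <;> simp [pathFrom, pt]

theorem pt2 (p u v : Pt) (w : List Pt) : pt (pathFrom p (u :: v :: w)) 2 = p + u + v := by
  cases w <;> simp [pathFrom, pt]

theorem pts (p : Pt) (l : List Pt) (u v : Pt) (r : List Pt) :
    pt (pathFrom p (l ++ u :: v :: r)) (l.length + 1 - 1) = p + l.sum ∧
    pt (pathFrom p (l ++ u :: v :: r)) (l.length + 1) = p + l.sum + u ∧
    pt (pathFrom p (l ++ u :: v :: r)) (l.length + 1 + 1) = p + l.sum + u + v := by
  refine ⟨?_, ?_, ?_⟩
  · have := pt_pathFrom_append p l (u :: v :: r) 0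
    rw [pt0] at this; simpa using this
  · rw [pt_pathFrom_append, pt1]
  · rw [show l.length + 1 + 1 = l.length + 2 by omega, pt_pathFrom_append, pt2]

theorem turnAt_iff (s : ℤ → Prop) (p : Pt) (w : List Pt) (k : ℕ) :
    TurnAt s (pathFrom p w) k ↔
      ∃ l u v r, w = l ++ u :: v :: r ∧ k = l.length + 1 ∧ s (det u v) := by
  constructor
  · rintro ⟨h0, h1, h2⟩
    rw [pathFrom_length] at h1
    have e : w = w.take (k - 1) ++ w[k - 1] :: w[k] :: w.drop (k + 1) := by
      conv_lhs => rw [← List.take_append_drop (k - 1) w]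
      rw [List.drop_eq_getElem_cons (by omega : k - 1 < w.length),
        List.drop_eq_getElem_cons (by omega : k - 1 + 1 < w.length)]
      simp [show k - 1 + 1 = k by omega]
    have hl : (w.take (k - 1)).length + 1 = k := by
      rw [List.length_take, min_eq_left (by omega)]; omega
    refine ⟨_, _, _, _, e, hl.symm, ?_⟩
    obtain ⟨e1, e2, e3⟩ := pts p (w.take (k - 1)) w[k - 1] w[k] (w.drop (k + 1))
    rw [← e, hl] at e1 e2 e3
    rw [e1, e2, e3] at h2
    simpa using h2
  · rintro ⟨l, u, v, r, rfl, rfl, h⟩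
    obtain ⟨e1, e2, e3⟩ := pts p l u v r
    refine ⟨by omega, by rw [pathFrom_length]; simp, ?_⟩
    rw [e1, e2, e3]
    simpa using h

theorem triArea2_eq (p : Pt) (l : List Pt) (u v : Pt) (r : List Pt) :
    triArea2 (pathFrom p (l ++ u :: v :: r)) (l.length + 1) = (det u v).natAbs := by
  obtain ⟨e1, e2, e3⟩ := pts p l u v r
  rw [triArea2, e1, e2, e3]
  simp

theorem cut_eq (p : Pt) (l : List Pt) (u v : Pt) (r : List Pt) :
    cut (pathFrom p (l ++ u :: v :: r)) (l.length + 1) = pathFrom p (l ++ (u + v) :: r) := by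
  induction l generalizing p with
  | nil => simp [cut, pathFrom, add_assoc]
  | cons a l ih =>
    have := ih (p + a)
    simpa [cut, pathFrom] using this

theorem set_eq (p : Pt) (l : List Pt) (u v : Pt) (r : List Pt) :
    (pathFrom p (l ++ u :: v :: r)).set (l.length + 1) (p + l.sum + v) =
      pathFrom p (l ++ v :: u :: r) := by
  induction l generalizing p with
  | nil => simp [pathFrom, add_right_comm]
  | cons a l ih =>
    have := ih (p + a)
    simpa [pathFrom, add_assoc] using this

theorem push_eq (p : Pt) (l : List Pt) (u v : Pt) (r : List Pt) :
    push (pathFrom p (l ++ u :: v :: r)) (l.length + 1) = pathFrom p (l ++ v :: u :: r) := by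
  obtain ⟨e1, e2, e3⟩ := pts p l u v r
  rw [push, e1, e2, e3, ← set_eq p l u v r]
  congr 1
  abel

theorem inside_iff (D : Set Pt) (p : Pt) (w : List Pt) :
    Inside D (pathFrom p w) ↔ InS D p w := by
  induction w generalizing p with
  | nil => simp [Inside, pathFrom, InS]
  | cons v w ih =>
    rw [InS, ← ih]
    simp [Inside, pathFrom]

theorem increasing_pos (p : Pt) (w : List Pt) (h : Increasing (pathFrom p w)) :
    ∀ v ∈ w, Pos v := by
  induction w generalizing p with
  | nil => simp
  | cons v w ih =>
    obtain ⟨t, ht⟩ := pathFrom_cons (p + v) w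
    have h' : Increasing (p :: pathFrom (p + v) w) := h
    have h2 : Increasing (pathFrom (p + v) w) := List.IsChain.tail h'
    rw [ht] at h'
    have h3 : lamLT p (p + v) := (List.isChain_cons_cons.1 h').1
    intro z hz
    rcases List.mem_cons.1 hz with rfl | hz
    · simp only [Pos, lamLT, Prod.fst_add, Prod.snd_add] at *
      omega
    · exact ih _ h2 z hz

/-! ## The multiplicity function -/

theorem firstTurn_unique {s : ℤ → Prop} {γ : List Pt} {k k' : ℕ} (h : FirstTurn s γ k)
    (h' : FirstTurn s γ k') : k = k' :=
  le_antisymm (h.2 _ h'.1) (h'.2 _ h.1)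

theorem multRel_unique {D : Set Pt} {I : List Pt → Prop} {s : ℤ → Prop} {γ : List Pt} {m m' : ℕ}
    (h : MultRel D I s γ m) (h' : MultRel D I s γ m') : m = m' := by
  induction h generalizing m' with
  | init h =>
    cases h' with
    | init _ => rfl
    | noTurn h1 _ => exact absurd h h1
    | stepIn h1 => exact absurd h h1
    | stepOut h1 => exact absurd h h1
  | noTurn h1 h2 =>
    cases h' with
    | init h => exact absurd h h1
    | noTurn _ _ => rfl
    | stepIn _ hk => exact absurd hk.1 (h2 _)
    | stepOut _ hk => exact absurd hk.1 (h2 _)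
  | stepIn h1 hk hin h2 h3 ih1 ih2 =>
    cases h' with
    | init h => exact absurd h h1
    | noTurn _ h => exact absurd hk.1 (h _)
    | stepIn _ hk' hin' h2' h3' =>
      obtain rfl := firstTurn_unique hk hk'
      rw [ih1 h2', ih2 h3']
    | stepOut _ hk' hin' h2' =>
      obtain rfl := firstTurn_unique hk hk'
      exact absurd hin hin'
  | stepOut h1 hk hin h2 ih1 =>
    cases h' with
    | init h => exact absurd h h1
    | noTurn _ h => exact absurd hk.1 (h _)
    | stepIn _ hk' hin' h2' h3' =>
      obtain rfl := firstTurn_unique hk hk'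
      exact absurd hin' hin
    | stepOut _ hk' hin' h2' =>
      obtain rfl := firstTurn_unique hk hk'
      rw [ih1 h2']

theorem multOf_eq {D : Set Pt} {I : List Pt → Prop} {s : ℤ → Prop} {γ : List Pt} {m : ℕ}
    (h : MultRel D I s γ m) : multOf D I s γ = m := by
  have hex : ∃ m, MultRel D I s γ m := ⟨m, h⟩
  rw [multOf, dif_pos hex]
  exact multRel_unique hex.choose_spec h

theorem exists_first {s : ℤ → Prop} {γ : List Pt} {k : ℕ} (h : TurnAt s γ k) :
    ∃ k, FirstTurn s γ k := by
  have hex : ∃ k, TurnAt s γ k := ⟨k, h⟩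
  exact ⟨Nat.find hex, Nat.find_spec hex, fun j hj => Nat.find_min' hex hj⟩

theorem multRel_exists (D : Set Pt) (I : List Pt → Prop) (p : Pt) :
    ∀ (n m : ℕ) (w : List Pt), w.length = n → inv w = m →
      ∃ c, MultRel D I (fun x => x < 0) (pathFrom p w) c := by
  intro n
  induction n using Nat.strong_induction_on with
  | _ n ihn =>
    intro m
    induction m using Nat.strong_induction_on with
    | _ m ihm =>
      intro w hn hm
      by_cases hI : I (pathFrom p w)
      · exact ⟨1, .init hI⟩
      by_cases hT : ∃ k, TurnAt (fun x => x < 0) (pathFrom p w) k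
      · obtain ⟨k, hk⟩ := hT
        obtain ⟨k, hk⟩ := exists_first hk
        obtain ⟨l, u, v, r, rfl, rfl, hd⟩ := (turnAt_iff _ _ _ _).1 hk.1
        obtain ⟨c1, hc1⟩ := ihn (l ++ (u + v) :: r).length (by rw [← hn]; simp) _ _ rfl rfl
        obtain ⟨c2, hc2⟩ := ihm (inv (l ++ v :: u :: r)) (by rw [← hm]; exact inv_push _ _ _ _ hd)
          (l ++ v :: u :: r) (by rw [← hn]; simp) rfl
        by_cases hin : Inside D (push (pathFrom p (l ++ u :: v :: r)) (l.length + 1))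
        · exact ⟨_, .stepIn hI hk hin (by rw [cut_eq]; exact hc1) (by rw [push_eq]; exact hc2)⟩
        · exact ⟨_, .stepOut hI hk hin (by rw [cut_eq]; exact hc1)⟩
      · push Not at hT
        exact ⟨0, .noTurn hI hT⟩

theorem multOf_spec (D : Set Pt) (I : List Pt → Prop) (p : Pt) (w : List Pt) :
    MultRel D I (fun x => x < 0) (pathFrom p w) (multOf D I (fun x => x < 0) (pathFrom p w)) := by
  obtain ⟨c, hc⟩ := multRel_exists D I p _ _ w rfl rfl
  rwa [multOf_eq hc]

theorem mult_step (D : Set Pt) (I : List Pt → Prop) (p : Pt) (l : List Pt) (u v : Pt)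
    (r : List Pt) (hI : ¬ I (pathFrom p (l ++ u :: v :: r)))
    (hk : FirstTurn (fun x => x < 0) (pathFrom p (l ++ u :: v :: r)) (l.length + 1))
    (hd : det u v < 0) :
    (multOf D I (fun x => x < 0) (pathFrom p (l ++ u :: v :: r)) : ℤ) =
      RR D p (fun w => (multOf D I (fun x => x < 0) (pathFrom p w) : ℤ)) l u v r := by
  have h1 := multOf_spec D I p (l ++ (u + v) :: r)
  have h2 := multOf_spec D I p (l ++ v :: u :: r)
  rw [← cut_eq] at h1
  rw [← push_eq] at h2
  have hab : ((det u v).natAbs : ℤ) = - det u v := by omega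
  by_cases hin : Inside D (push (pathFrom p (l ++ u :: v :: r)) (l.length + 1))
  · rw [multOf_eq (.stepIn hI hk hin h1 h2)]
    rw [push_eq, inside_iff] at hin
    rw [RR, if_pos hin, triArea2_eq, cut_eq, push_eq]
    push_cast
    rw [← hab]; simp
  · rw [multOf_eq (.stepOut hI hk hin h1)]
    rw [push_eq, inside_iff] at hin
    rw [RR, if_neg hin, triArea2_eq, cut_eq]
    push_cast
    rw [← hab]; simp

/-! ## Initial paths -/

/-- Conditions on a boundary chain. -/
def GoodChain (ch : List (Pt × Multiset ℕ)) : Prop :=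
  (∀ e ∈ ch, lamLT (0, 0) e.1) ∧ (∀ e ∈ ch, e.2 ≠ 0 ∧ ∀ k ∈ e.2, 0 < k) ∧
    (ch.map Prod.fst).IsChain fun u v => 0 < det u v

theorem GoodChain.tail {e : Pt × Multiset ℕ} {es : List (Pt × Multiset ℕ)}
    (h : GoodChain (e :: es)) : GoodChain es :=
  ⟨fun x hx => h.1 x (List.mem_cons_of_mem _ hx), fun x hx => h.2.1 x (List.mem_cons_of_mem _ hx),
    List.IsChain.tail h.2.2⟩

theorem expand_cons (e : Pt × Multiset ℕ) (es : List (Pt × Multiset ℕ)) (s : List Pt) :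
    ExpandChain (e :: es) s ↔ ∃ (l : List ℕ) (r : List Pt), (l : Multiset ℕ) = e.2 ∧
      ExpandChain es r ∧
      s = (l.map fun k : ℕ => (((k : ℤ) * e.1.1, (k : ℤ) * e.1.2) : Pt)) ++ r := by
  have hm : ∀ l : List ℕ, (do let a ← l; pure (a : ℤ)) = l.map (fun k : ℕ => (k : ℤ)) := by
    intro l
    induction l with
    | nil => rfl
    | cons a l ih => simp_all
  simp only [ExpandChain, hm, List.map_map]
  rfl

theorem expand_head {e : Pt × Multiset ℕ} {es : List (Pt × Multiset ℕ)} (h : GoodChain (e :: es))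
    {v : Pt} {r : List Pt} (hr : ExpandChain es (v :: r)) {k : ℕ} (hk : k ∈ e.2) :
    0 < det ((k : ℤ) * e.1.1, (k : ℤ) * e.1.2) v := by
  cases es with
  | nil => simp [ExpandChain] at hr
  | cons f es =>
    obtain ⟨l, r', hl, -, he⟩ := (expand_cons _ _ _).1 hr
    have hne : l ≠ [] := by
      rintro rfl
      exact (h.2.1 f (by simp)).1 (by rw [← hl]; rfl)
    obtain ⟨j, l, rfl⟩ := List.exists_cons_of_ne_nil hne
    simp only [List.map_cons, List.cons_append, List.cons.injEq] at he
    have hj : 0 < j := (h.2.1 f (by simp)).2 j (by rw [← hl]; simp)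
    have hk' : 0 < k := (h.2.1 e (by simp)).2 k hk
    have hd : 0 < det e.1 f.1 := by
      have := h.2.2
      simp only [List.map_cons, List.isChain_cons_cons] at this
      exact this.1
    rw [he.1]
    have : det ((k : ℤ) * e.1.1, (k : ℤ) * e.1.2) ((j : ℤ) * f.1.1, (j : ℤ) * f.1.2) =
        (k : ℤ) * j * det e.1 f.1 := by simp only [det]; ring
    rw [this]
    positivity

theorem map_append_cases {M r' l r : List Pt} {u v : Pt} (h : M ++ r' = l ++ u :: v :: r) :
    (∃ a, M = l ++ u :: v :: a ∧ r = a ++ r') ∨ (M = l ++ [u] ∧ r' = v :: r) ∨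
    (∃ b, l = M ++ b ∧ r' = b ++ u :: v :: r) := by
  rcases List.append_eq_append_iff.1 h with ⟨a, h1, h2⟩ | ⟨a, h1, h2⟩
  · exact Or.inr (Or.inr ⟨a, h1, h2⟩)
  · rcases a with _ | ⟨x, _ | ⟨y, a⟩⟩ <;> simp at h2
    · right; right; exact ⟨[], by simpa using h1.symm, by simp [h2]⟩
    · right; left; exact ⟨by rw [h1, h2.1], by rw [h2.2]⟩
    · left; exact ⟨a, by rw [h1, h2.1, h2.2.1], h2.2.2⟩

theorem map_split {f : ℕ → Pt} {L : List ℕ} {l a : List Pt} {u v : Pt}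
    (h : L.map f = l ++ u :: v :: a) : ∃ l' i j a', L = l' ++ i :: j :: a' ∧ l = l'.map f ∧
      u = f i ∧ v = f j ∧ a = a'.map f := by
  rw [List.map_eq_append_iff] at h
  obtain ⟨l', t, rfl, h1, h2⟩ := h
  rw [List.map_eq_cons_iff] at h2
  obtain ⟨i, t, rfl, h3, h4⟩ := h2
  rw [List.map_eq_cons_iff] at h4
  obtain ⟨j, t, rfl, h5, h6⟩ := h4
  exact ⟨l', i, j, t, rfl, h1.symm, h3.symm, h5.symm, h6.symm⟩

theorem expand_noturn {ch : List (Pt × Multiset ℕ)} (h : GoodChain ch) {l r : List Pt} {u v : Pt}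
    (he : ExpandChain ch (l ++ u :: v :: r)) : 0 ≤ det u v := by
  induction ch generalizing l with
  | nil => simp [ExpandChain] at he
  | cons e es ih =>
    obtain ⟨L, r', hL, hr', heq⟩ := (expand_cons _ _ _).1 he
    rcases map_append_cases heq.symm with ⟨a, h1, h2⟩ | ⟨h1, h2⟩ | ⟨b, h1, h2⟩
    · obtain ⟨l', i, j, a', -, -, rfl, rfl, -⟩ := map_split h1
      apply le_of_eq
      simp only [det]; ring
    · subst h2
      have hu : u ∈ L.map fun k : ℕ => ((k : ℤ) * e.1.1, (k : ℤ) * e.1.2) := by rw [h1]; simp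
      obtain ⟨k, hk, rfl⟩ := List.mem_map.1 hu
      exact (expand_head h hr' (by rw [← hL]; simpa using hk)).le
    · subst h2
      exact ih h.tail hr'

theorem expand_swap {ch : List (Pt × Multiset ℕ)} (h : GoodChain ch) {l r : List Pt} {u v : Pt}
    (h0 : det u v = 0)
    (he : ExpandChain ch (l ++ u :: v :: r)) : ExpandChain ch (l ++ v :: u :: r) := by
  induction ch generalizing l with
  | nil => simp [ExpandChain] at he
  | cons e es ih =>
    obtain ⟨L, r', hL, hr', heq⟩ := (expand_cons _ _ _).1 he
    rcases map_append_cases heq.symm with ⟨a, h1, h2⟩ | ⟨h1, h2⟩ | ⟨b, h1, h2⟩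
    · obtain ⟨l', i, j, a', rfl, rfl, rfl, rfl, rfl⟩ := map_split h1
      refine (expand_cons _ _ _).2 ⟨l' ++ j :: i :: a', r', ?_, hr', ?_⟩
      · rw [← hL, Multiset.coe_eq_coe]
        exact List.Perm.append_left _ (List.Perm.swap _ _ _)
      · rw [h2]; simp
    · subst h2
      have hu : u ∈ L.map fun k : ℕ => ((k : ℤ) * e.1.1, (k : ℤ) * e.1.2) := by rw [h1]; simp
      obtain ⟨k, hk, rfl⟩ := List.mem_map.1 hu
      have := expand_head h hr' (k := k) (by rw [← hL]; simpa using hk)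
      omega
    · subst h2
      refine (expand_cons _ _ _).2 ⟨L, b ++ v :: u :: r, hL, ih h.tail hr', ?_⟩
      rw [h1]; simp

theorem pathFrom_inj {p : Pt} {w w' : List Pt} (h : pathFrom p w = pathFrom p w') : w = w' := by
  induction w generalizing p w' with
  | nil =>
    have := congrArg List.length h
    simp only [pathFrom_length, List.length_nil] at this
    exact (List.length_eq_zero_iff.1 (by omega)).symm
  | cons v w ih =>
    cases w' with
    | nil =>
      have := congrArg List.length h
      simp [pathFrom_length] at this
    | cons v' w' =>
      simp only [pathFrom, List.cons.injEq, true_and] at h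
      have h1 := congrArg (fun l => pt l 0) h
      simp only [pt0] at h1
      have hv : v = v' := add_left_cancel h1
      subst hv
      rw [ih h]

theorem initChain_iff (p : Pt) (ch : List (Pt × Multiset ℕ)) (w : List Pt) :
    InitChain p ch (pathFrom p w) ↔ ExpandChain ch w :=
  ⟨fun ⟨_, hs, he⟩ => pathFrom_inj he ▸ hs, fun h => ⟨w, h, rfl⟩⟩

theorem polySet_cvx (P : PolyData) : Cvx (polySet P) := by
  intro x y z t α β γ hα hβ hγ hN e1 e2 hx hy hz
  simp only [polySet, Set.mem_ofPred_eq] at *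
  have hcv := convex_convexHull ℝ
    (toR '' {w | w ∈ chainPts P.p P.cw ∨ w ∈ chainPts P.p P.ccw})
  generalize convexHull ℝ
    (toR '' {w | w ∈ chainPts P.p P.cw ∨ w ∈ chainPts P.p P.ccw}) = C at *
  have hα' : (0 : ℝ) ≤ α := by exact_mod_cast hα
  have hβ' : (0 : ℝ) ≤ β := by exact_mod_cast hβ
  have hγ' : (0 : ℝ) ≤ γ := by exact_mod_cast hγ
  have hN' : (0 : ℝ) < α + β + γ := by exact_mod_cast hN
  have e1' : ((α : ℝ) + β + γ) * t.1 = α * x.1 + β * y.1 + γ * z.1 := by exact_mod_cast e1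
  have e2' : ((α : ℝ) + β + γ) * t.2 = α * x.2 + β * y.2 + γ * z.2 := by exact_mod_cast e2
  have key := hcv.sum_mem (t := Finset.univ) (w := ![α / (α + β + γ : ℝ), β / (α + β + γ), γ / (α + β + γ)])
    (z := ![toR x, toR y, toR z])
    (by intro i _; fin_cases i <;> simp <;> positivity)
    (by simp [Fin.sum_univ_three]; field_simp)
    (by intro i _; fin_cases i <;> simpa)
  convert key using 1
  simp only [Fin.sum_univ_three, toR]
  ext
  · simp; field_simp; linarith
  · simp; field_simp; linarith

/-- The negative multiplicity recursion may be performed at *any* right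
turn, not necessarily the first one. -/
theorem multMinus_any_right_turn (P : PolyData) (γ : List Pt)
    (hinc : Increasing γ)
    (hfrom : γ.head? = some P.p) (hto : γ.getLast? = some P.q)
    (hin : Inside (polySet P) γ)
    (hninit : ¬InitChain P.p P.ccw γ)
    (k : ℕ) (hk : TurnAt (fun x => x < 0) γ k) :
    multMinusP P γ = triArea2 γ k * multMinusP P (cut γ k) +
      (if Inside (polySet P) (push γ k) then multMinusP P (push γ k) else 0) := by
  have hgood : GoodChain P.ccw := ⟨P.ccw_lam, P.ccw_pos, P.ccw_conv⟩
  have hD := polySet_cvx P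
  obtain ⟨w, rfl⟩ := exists_steps γ P.p hfrom
  have hV : Valid (polySet P) P.p w := ⟨increasing_pos _ _ hinc, (inside_iff _ _ _).1 hin⟩
  have hAB := AB_all (p := P.p) (F := fun w => (multMinusP P (pathFrom P.p w) : ℤ)) hD ?_ ?_
    _ _ w rfl rfl hV
  · obtain ⟨l, u, v, r, rfl, rfl, hd⟩ := (turnAt_iff _ _ _ _).1 hk
    have h := hAB.1 l u v r rfl hd
    simp only [RR] at h
    rw [triArea2_eq, cut_eq, push_eq]
    simp only [inside_iff]
    have hab : ((det u v).natAbs : ℤ) = - det u v := by omega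
    zify
    rw [h]
    rw [← hab]; simp
  · rintro w ⟨l, u, v, r, he, hd⟩
    have hT : TurnAt (fun x => x < 0) (pathFrom P.p w) (l.length + 1) :=
      (turnAt_iff _ _ _ _).2 ⟨l, u, v, r, he, rfl, hd⟩
    obtain ⟨k, hk⟩ := exists_first hT
    obtain ⟨l, u, v, r, rfl, rfl, hd⟩ := (turnAt_iff _ _ _ _).1 hk.1
    refine ⟨l, u, v, r, rfl, hd, ?_⟩
    refine mult_step _ _ P.p l u v r ?_ hk hd
    rw [initChain_iff]
    intro h
    have := expand_noturn hgood h
    omega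
  · intro l u v r hpos h0 h1 h2
    have key : ∀ w, ¬ HasTurn w → multMinusP P (pathFrom P.p w) =
        if ExpandChain P.ccw w then 1 else 0 := by
      intro w hw
      split_ifs with h
      · exact multOf_eq (.init ((initChain_iff _ _ _).2 h))
      · refine multOf_eq (.noTurn (by rwa [initChain_iff]) ?_)
        intro k hk
        obtain ⟨l, u, v, r, rfl, rfl, hd⟩ := (turnAt_iff _ _ _ _).1 hk
        exact hw ⟨l, u, v, r, rfl, hd⟩
    have h0' : det v u = 0 := by rw [det_anti, h0]; rfl
    have hiff : ExpandChain P.ccw (l ++ u :: v :: r) ↔ ExpandChain P.ccw (l ++ v :: u :: r) :=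
      ⟨expand_swap hgood h0, expand_swap hgood h0'⟩
    simp only [key _ h1, key _ h2, hiff]

end TropPaths
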